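/- arXiv:2009.06582 — 2 statements merged into one kernel-verified Lean document; each statement's English description precedes it below -/
import Mathlib

section
/- Let C be a properly convex open cone in R^{n+1} and V the volume function on the dual cone C*. If ψ ∈ Fr(C*) (the frontier of the dual cone), then V(φ) → ∞ as φ → ψ. Consequently, for any q ∈ C, the restriction of V to the affine slice C*_q = {φ ∈ C* : φ(q) = 1} attains a unique minimum. -/
open MeasureTheory Pointwise Filter
open scoped RealInnerProductSpace

/-- A cone in `ℝ^{n+1}`: invariant under positive scaling. -/
def IsCone {n : ℕ} (C : Set (EuclideanSpace ℝ (Fin (n+1)))) : Prop :=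
  ∀ t : ℝ, 0 < t → t • C = C

/-- Sharpness: the closure of the cone contains no pair of antipodal nonzero vectors. -/
def IsSharp {n : ℕ} (C : Set (EuclideanSpace ℝ (Fin (n+1)))) : Prop :=
  ∀ v : EuclideanSpace ℝ (Fin (n+1)), v ≠ 0 → v ∈ closure C → -v ∉ closure C

/-- The open dual cone, identified with vectors via the inner product. -/
def DualCone {n : ℕ} (C : Set (EuclideanSpace ℝ (Fin (n+1)))) :
    Set (EuclideanSpace ℝ (Fin (n+1))) :=
  {v | ∀ x ∈ closure C, x ≠ 0 → 0 < ⟪x, v⟫}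

/-- The volume function `V(φ) = vol(C ∩ φ⁻¹((0,1]))`. -/
noncomputable def coneVolume {n : ℕ} (C : Set (EuclideanSpace ℝ (Fin (n+1))))
    (v : EuclideanSpace ℝ (Fin (n+1))) : ℝ :=
  (volume (C ∩ {x | ⟪x, v⟫ ∈ Set.Ioc (0:ℝ) 1})).toReal

/-!
Write `L φ = ∫_C exp (-⟪x, φ⟫) dx`, with values in `[0, ∞]`. Slicing `C` along the level sets of `φ`
gives `L φ = (n + 1)! V φ` on the dual cone, so `V` can be replaced by `L`, which makes sense for
every `φ`. By Fatou's lemma `L` is lower semicontinuous, and it is finite exactly on the dual cone: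
if `⟪x, φ⟫ ≤ 0` for some nonzero `x` in the closure of `C`, the half-space truncation of `C` by `φ`
is stable under translation by `x` and has infinite volume. Hence `L` tends to `∞` at the frontier,
and it attains its minimum on the compact slice of the closed dual cone at a point where it is
finite. Strict convexity of the exponential makes that point unique.
-/

open scoped ENNReal Topology Nat

section Measure

variable {E : Type*} [MeasurableSpace E]

theorem lowerSemicontinuous_lintegral {X : Type*} [TopologicalSpace X] [FirstCountableTopology X]
    {μ : Measure E} {f : X → E → ℝ≥0∞} (hf : ∀ v, Measurable (f v))
    (hlsc : ∀ x, LowerSemicontinuous fun v => f v x) :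
    LowerSemicontinuous fun v => ∫⁻ x, f v x ∂μ :=
  lowerSemicontinuous_iff_le_liminf.2 fun v =>
    (lintegral_mono fun x => (hlsc x).le_liminf v).trans (lintegral_liminf_le hf)

theorem lintegral_Ici_exp_neg (a : ℝ) :
    ∫⁻ t in Set.Ici a, ENNReal.ofReal (Real.exp (-t)) = ENNReal.ofReal (Real.exp (-a)) := by
  rw [setLIntegral_congr Ioi_ae_eq_Ici.symm,
    ← ofReal_integral_eq_lintegral_ofReal (integrableOn_exp_neg_Ioi a)
      (Eventually.of_forall fun t => (Real.exp_pos _).le), integral_exp_neg_Ioi]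

theorem lintegral_Ioi_exp_neg_mul_pow (d : ℕ) :
    ∫⁻ t in Set.Ioi (0 : ℝ), ENNReal.ofReal (Real.exp (-t)) * ENNReal.ofReal (t ^ d) = d ! := by
  have hconv := Real.GammaIntegral_convergent (s := d + 1) (by positivity)
  have hGamma := Real.Gamma_eq_integral (s := d + 1) (by positivity)
  simp only [add_sub_cancel_right, Real.rpow_natCast] at hconv hGamma
  rw [← ENNReal.ofReal_natCast, ← Real.Gamma_nat_eq_factorial, hGamma,
    ofReal_integral_eq_lintegral_ofReal hconv
      ((ae_restrict_mem measurableSet_Ioi).mono fun t (ht : 0 < t) => by positivity)]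
  exact lintegral_congr fun t => (ENNReal.ofReal_mul (Real.exp_pos _).le).symm

theorem lintegral_exp_neg_eq_lintegral_measure_le {ν : Measure E} [SFinite ν] {f : E → ℝ}
    (hf : Measurable f) :
    ∫⁻ x, ENNReal.ofReal (Real.exp (-f x)) ∂ν =
      ∫⁻ t, ENNReal.ofReal (Real.exp (-t)) * ν {x | f x ≤ t} := by
  have hmeas : MeasurableSet {p : E × ℝ | f p.1 ≤ p.2} :=
    measurableSet_le (by fun_prop) measurable_snd
  calc ∫⁻ x, ENNReal.ofReal (Real.exp (-f x)) ∂ν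
      = ∫⁻ x, ∫⁻ t : ℝ, {p : E × ℝ | f p.1 ≤ p.2}.indicator
          (fun p => ENNReal.ofReal (Real.exp (-p.2))) (x, t) ∂volume ∂ν := by
        refine lintegral_congr fun x => ?_
        rw [← lintegral_Ici_exp_neg, ← lintegral_indicator measurableSet_Ici]
        rfl
    _ = ∫⁻ t : ℝ, ∫⁻ x, {p : E × ℝ | f p.1 ≤ p.2}.indicator
          (fun p => ENNReal.ofReal (Real.exp (-p.2))) (x, t) ∂ν :=
        lintegral_lintegral_swap (Measurable.indicator (by fun_prop) hmeas).aemeasurable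
    _ = ∫⁻ t, ENNReal.ofReal (Real.exp (-t)) * ν {x | f x ≤ t} := by
        exact lintegral_congr fun t =>
          lintegral_indicator_const (measurableSet_le hf (measurable_const (a := t)))
            (ENNReal.ofReal (Real.exp (-t)))

end Measure

section Haar

variable {E : Type*} [NormedAddCommGroup E] [NormedSpace ℝ E] [MeasurableSpace E] [BorelSpace E]
  {μ : Measure E}

theorem measure_eq_top_of_forall_add_mem [μ.IsAddLeftInvariant] [μ.IsOpenPosMeasure] {U : Set E}
    (hU : IsOpen U) (hne : U.Nonempty) {z : E} (hz : z ≠ 0) (hadd : ∀ x ∈ U, z + x ∈ U) :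
    μ U = ∞ := by
  obtain ⟨p, hp⟩ := hne
  obtain ⟨ε, hε, hball⟩ := Metric.isOpen_iff.1 hU p hp
  obtain ⟨r, hr, hrε⟩ := exists_between (lt_min hε (half_pos (norm_pos_iff.2 hz)))
  let B : ℕ → Set E := fun k => (fun x => -(k • z) + x) ⁻¹' Metric.ball p r
  have hB_sub (k : ℕ) : B k ⊆ U := fun x hx => by
    have hiter : ∀ j : ℕ, j • z + (-(k • z) + x) ∈ U := fun j => by
      induction j with
      | zero => simpa using hball (Metric.ball_subset_ball (hrε.le.trans (min_le_left _ _)) hx)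
      | succ j ih => simpa only [succ_nsmul', add_assoc] using hadd _ ih
    simpa using hiter k
  have hB_disj : Pairwise (Function.onFun Disjoint B) := fun i j hij => by
    refine Set.disjoint_left.2 fun x hi hj => ?_
    have hsep : ‖z‖ ≤ dist (-(i • z) + x) (-(j • z) + x) := by
      have hint : (1 : ℝ) ≤ |(j : ℝ) - i| := by
        exact_mod_cast Int.one_le_abs (show (j : ℤ) - i ≠ 0 by omega)
      rw [dist_add_right, dist_neg_neg, dist_comm, dist_eq_norm, ← Nat.cast_smul_eq_nsmul ℝ,
        ← Nat.cast_smul_eq_nsmul ℝ, ← sub_smul, norm_smul]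
      exact le_mul_of_one_le_left (norm_nonneg z) hint
    have htri := dist_triangle_right (-(i • z) + x) (-(j • z) + x) p
    linarith [Metric.mem_ball.1 hi, Metric.mem_ball.1 hj, hrε.trans_le (min_le_right _ _)]
  have hB_meas (k : ℕ) : MeasurableSet (B k) := measurableSet_ball.preimage (by fun_prop)
  refine top_unique ?_
  calc ∞ = ∑' _ : ℕ, μ (Metric.ball p r) :=
        (ENNReal.tsum_const_eq_top_of_ne_zero (Metric.measure_ball_pos μ p hr).ne').symm
    _ = ∑' k, μ (B k) := tsum_congr fun k => (measure_preimage_add μ _ _).symm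
    _ = μ (⋃ k, B k) := (measure_iUnion hB_disj hB_meas).symm
    _ ≤ μ U := measure_mono (Set.iUnion_subset hB_sub)

variable [FiniteDimensional ℝ E] [μ.IsAddHaarMeasure] {C : Set E} {f : E → ℝ}

theorem measure_inter_preimage_Ioc_eq_pow_mul (hC : ∀ t : ℝ, 0 < t → t • C = C)
    (hhom : ∀ t : ℝ, 0 < t → ∀ x, f (t • x) = t * f x) {t : ℝ} (ht : 0 < t) :
    μ (C ∩ f ⁻¹' Set.Ioc 0 t) =
      ENNReal.ofReal (t ^ Module.finrank ℝ E) * μ (C ∩ f ⁻¹' Set.Ioc 0 1) := by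
  have hscale : C ∩ f ⁻¹' Set.Ioc 0 t = t • (C ∩ f ⁻¹' Set.Ioc 0 1) := by
    rw [Set.smul_set_inter₀ ht.ne', hC t ht]
    congr 1
    ext x
    rw [Set.mem_smul_set_iff_inv_smul_mem₀ ht.ne']
    simp [hhom _ (inv_pos.2 ht), inv_mul_le_iff₀ ht, ht]
  rw [hscale, Measure.addHaar_smul, abs_of_pos (by positivity)]

theorem lintegral_exp_neg_eq_factorial_mul_measure (hC : ∀ t : ℝ, 0 < t → t • C = C)
    (hf : Measurable f) (hhom : ∀ t : ℝ, 0 < t → ∀ x, f (t • x) = t * f x)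
    (hpos : ∀ x ∈ C, 0 < f x) :
    ∫⁻ x in C, ENNReal.ofReal (Real.exp (-f x)) ∂μ =
      (Module.finrank ℝ E)! * μ (C ∩ f ⁻¹' Set.Ioc 0 1) := by
  have hsublevel (t : ℝ) : μ.restrict C {x | f x ≤ t} = μ (C ∩ f ⁻¹' Set.Ioc 0 t) := by
    rw [Measure.restrict_apply (measurableSet_le hf measurable_const)]
    congr 1
    ext x
    simp only [Set.mem_inter_iff, Set.mem_ofPred_eq, Set.mem_preimage, Set.mem_Ioc]
    exact ⟨fun h => ⟨h.2, hpos x h.2, h.1⟩, fun h => ⟨h.2.2, h.1⟩⟩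
  calc ∫⁻ x in C, ENNReal.ofReal (Real.exp (-f x)) ∂μ
      = ∫⁻ t, ENNReal.ofReal (Real.exp (-t)) * μ (C ∩ f ⁻¹' Set.Ioc 0 t) := by
        simp_rw [lintegral_exp_neg_eq_lintegral_measure_le hf, hsublevel]
    _ = ∫⁻ t in Set.Ioi (0 : ℝ), ENNReal.ofReal (Real.exp (-t)) * μ (C ∩ f ⁻¹' Set.Ioc 0 t) := by
        refine (setLIntegral_eq_of_support_subset fun t ht => ?_).symm
        by_contra hneg
        exact ht (by simp [Set.Ioc_eq_empty (show ¬0 < t from hneg)])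
    _ = ∫⁻ t in Set.Ioi (0 : ℝ), ENNReal.ofReal (Real.exp (-t)) *
          ENNReal.ofReal (t ^ Module.finrank ℝ E) * μ (C ∩ f ⁻¹' Set.Ioc 0 1) :=
        setLIntegral_congr_fun measurableSet_Ioi fun t ht => by
          simp only [measure_inter_preimage_Ioc_eq_pow_mul hC hhom ht, mul_assoc]
    _ = (Module.finrank ℝ E)! * μ (C ∩ f ⁻¹' Set.Ioc 0 1) := by
        rw [lintegral_mul_const _ (by fun_prop), lintegral_Ioi_exp_neg_mul_pow]

end Haar

section LaplaceTransform

variable {E : Type*} [NormedAddCommGroup E] [InnerProductSpace ℝ E] {v w : E} {a b : ℝ}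

theorem exp_neg_inner_combo_le (x : E) (ha : 0 ≤ a) (hb : 0 ≤ b) (hab : a + b = 1) :
    Real.exp (-⟪x, a • v + b • w⟫) ≤ a * Real.exp (-⟪x, v⟫) + b * Real.exp (-⟪x, w⟫) := by
  have h := convexOn_exp.2 (Set.mem_univ (-⟪x, v⟫)) (Set.mem_univ (-⟪x, w⟫)) ha hb hab
  simpa only [inner_add_right, real_inner_smul_right, smul_eq_mul, mul_neg, ← neg_add] using h

theorem exp_neg_inner_combo_lt {x : E} (hx : ⟪x, v⟫ ≠ ⟪x, w⟫) (ha : 0 < a) (hb : 0 < b)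
    (hab : a + b = 1) :
    Real.exp (-⟪x, a • v + b • w⟫) < a * Real.exp (-⟪x, v⟫) + b * Real.exp (-⟪x, w⟫) := by
  have h := strictConvexOn_exp.2 (Set.mem_univ (-⟪x, v⟫)) (Set.mem_univ (-⟪x, w⟫))
    (neg_injective.ne hx) ha hb hab
  simpa only [inner_add_right, real_inner_smul_right, smul_eq_mul, mul_neg, ← neg_add] using h

variable [MeasurableSpace E]

/-- The Laplace transform of a measure on a real inner product space. It is valued in `[0, ∞]`, so
that divergence of the integral is recorded as the value `∞`. For the restriction of Lebesgue
measure to a cone this is the Koszul–Vinberg characteristic function of the cone. -/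
noncomputable def laplaceTransform (ν : Measure E) (v : E) : ℝ≥0∞ :=
  ∫⁻ x, ENNReal.ofReal (Real.exp (-⟪x, v⟫)) ∂ν

variable [BorelSpace E] {ν : Measure E}

theorem lowerSemicontinuous_laplaceTransform (ν : Measure E) :
    LowerSemicontinuous (laplaceTransform ν) :=
  lowerSemicontinuous_lintegral (fun v => by fun_prop) fun x => Continuous.lowerSemicontinuous
    (ENNReal.continuous_ofReal.comp (by fun_prop))

theorem lintegral_combo_exp_neg_inner (ha : 0 ≤ a) (hb : 0 ≤ b) :
    ∫⁻ x, ENNReal.ofReal (a * Real.exp (-⟪x, v⟫) + b * Real.exp (-⟪x, w⟫)) ∂ν =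
      ENNReal.ofReal a * laplaceTransform ν v + ENNReal.ofReal b * laplaceTransform ν w := by
  simp_rw [laplaceTransform]
  rw [← lintegral_const_mul _ (by fun_prop), ← lintegral_const_mul _ (by fun_prop),
    ← lintegral_add_left (by fun_prop)]
  refine lintegral_congr fun x => ?_
  rw [ENNReal.ofReal_add (by positivity) (by positivity), ENNReal.ofReal_mul ha,
    ENNReal.ofReal_mul hb]

theorem laplaceTransform_combo_le (ha : 0 ≤ a) (hb : 0 ≤ b) (hab : a + b = 1) :
    laplaceTransform ν (a • v + b • w) ≤
      ENNReal.ofReal a * laplaceTransform ν v + ENNReal.ofReal b * laplaceTransform ν w := by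
  rw [← lintegral_combo_exp_neg_inner ha hb]
  exact lintegral_mono fun x => ENNReal.ofReal_le_ofReal (exp_neg_inner_combo_le x ha hb hab)

theorem laplaceTransform_combo_lt (hν : ∀ u ≠ 0, ν {x | ⟪x, u⟫ ≠ 0} ≠ 0) (hvw : v ≠ w)
    (ha : 0 < a) (hb : 0 < b) (hab : a + b = 1) (hfin : laplaceTransform ν (a • v + b • w) ≠ ∞) :
    laplaceTransform ν (a • v + b • w) <
      ENNReal.ofReal a * laplaceTransform ν v + ENNReal.ofReal b * laplaceTransform ν w := by
  rw [← lintegral_combo_exp_neg_inner ha.le hb.le]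
  refine lintegral_strict_mono_of_ae_le_of_ae_lt_on (by fun_prop) hfin
    (Eventually.of_forall fun x =>
      ENNReal.ofReal_le_ofReal (exp_neg_inner_combo_le x ha.le hb.le hab))
    (hν (v - w) (sub_ne_zero.2 hvw)) (Eventually.of_forall fun x hx => ?_)
  have hx' : ⟪x, v⟫ ≠ ⟪x, w⟫ := by rwa [← sub_ne_zero, ← inner_sub_right]
  exact (ENNReal.ofReal_lt_ofReal_iff (by positivity)).2 (exp_neg_inner_combo_lt hx' ha hb hab)

theorem strictConvexOn_toReal_laplaceTransform (hν : ∀ u ≠ 0, ν {x | ⟪x, u⟫ ≠ 0} ≠ 0) :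
    StrictConvexOn ℝ {v | laplaceTransform ν v ≠ ∞} fun v => (laplaceTransform ν v).toReal := by
  have hbound {v w : E} {a b : ℝ} (hv : laplaceTransform ν v ≠ ∞)
      (hw : laplaceTransform ν w ≠ ∞) :
      ENNReal.ofReal a * laplaceTransform ν v + ENNReal.ofReal b * laplaceTransform ν w ≠ ∞ := by
    finiteness
  have hdomain : Convex ℝ {v | laplaceTransform ν v ≠ ∞} := fun v hv w hw a b ha hb hab =>
    ne_top_of_le_ne_top (hbound hv hw) (laplaceTransform_combo_le ha hb hab)
  refine ⟨hdomain, fun v hv w hw hvw a b ha hb hab => ?_⟩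
  have hlt := (ENNReal.toReal_lt_toReal (hdomain hv hw ha.le hb.le hab) (hbound hv hw)).2
    (laplaceTransform_combo_lt hν hvw ha hb hab (hdomain hv hw ha.le hb.le hab))
  rwa [ENNReal.toReal_add (by finiteness [hv]) (by finiteness), ENNReal.toReal_mul,
    ENNReal.toReal_mul, ENNReal.toReal_ofReal ha.le, ENNReal.toReal_ofReal hb.le] at hlt

theorem laplaceTransform_eq_top_of_measure_eq_top {c : ℝ} (h : ν {x | ⟪x, v⟫ ≤ c} = ∞) :
    laplaceTransform ν v = ∞ := by
  refine top_unique ?_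
  calc ∞ = ENNReal.ofReal (Real.exp (-c)) * ν {x | ⟪x, v⟫ ≤ c} := by
        rw [h, ENNReal.mul_top (by simp [Real.exp_pos])]
    _ ≤ ENNReal.ofReal (Real.exp (-c)) *
          ν {x | ENNReal.ofReal (Real.exp (-c)) ≤ ENNReal.ofReal (Real.exp (-⟪x, v⟫))} := by
        gcongr with x
        intro hx
        gcongr
    _ ≤ laplaceTransform ν v := mul_meas_ge_le_lintegral (by fun_prop) _

theorem measure_restrict_inner_ne_zero [FiniteDimensional ℝ E] {μ : Measure E}
    [μ.IsAddHaarMeasure] {s : Set E} (hs : μ s ≠ 0) {u : E} (hu : u ≠ 0) :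
    μ.restrict s {x | ⟪x, u⟫ ≠ 0} ≠ 0 := by
  have hhyperplane : μ {x | ⟪x, u⟫ = 0} = 0 := by
    have h := Measure.addHaar_submodule μ (ℝ ∙ u)ᗮ (by simpa using hu)
    rwa [show ((ℝ ∙ u)ᗮ : Set E) = {x | ⟪x, u⟫ = 0} by
      ext x; simp [Submodule.mem_orthogonal_singleton_iff_inner_left]] at h
  intro h
  refine hs (measure_mono_null (t := {x | ⟪x, u⟫ = 0} ∪ {x | ⟪x, u⟫ ≠ 0} ∩ s) (fun x hx => ?_) ?_)
  · by_cases hxu : ⟪x, u⟫ = 0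
    exacts [.inl hxu, .inr ⟨hxu, hx⟩]
  · rw [Measure.restrict_apply (by measurability)] at h
    exact measure_union_null hhyperplane h

end LaplaceTransform

section InnerDual

open ProperCone

variable {E : Type*} [NormedAddCommGroup E] [InnerProductSpace ℝ E]

theorem mul_norm_le_inner_of_closedBall {q w : E} {r : ℝ} (hr : 0 ≤ r)
    (h : ∀ x ∈ Metric.closedBall q r, 0 ≤ ⟪x, w⟫) : r * ‖w‖ ≤ ⟪q, w⟫ := by
  rcases eq_or_ne w 0 with rfl | hw
  · simp
  have hw' : ‖w‖ ≠ 0 := norm_ne_zero_iff.2 hw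
  have hinner := h (q - (r / ‖w‖) • w)
    (by simp [Metric.mem_closedBall, norm_smul, abs_of_nonneg hr, hw'])
  rw [inner_sub_left, real_inner_smul_left, real_inner_self_eq_norm_mul_norm, ← mul_assoc,
    div_mul_cancel₀ _ hw'] at hinner
  linarith

theorem isCompact_slice_innerDual [FiniteDimensional ℝ E] {s : Set E} {q : E}
    (hq : q ∈ interior s) (c : ℝ) : IsCompact {w ∈ (innerDual s : Set E) | ⟪q, w⟫ = c} := by
  obtain ⟨r, hr, hball⟩ := Metric.nhds_basis_closedBall.mem_iff.1 (mem_interior_iff_mem_nhds.1 hq)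
  refine Metric.isCompact_of_isClosed_isBounded
    ((innerDual s).isClosed.inter (isClosed_eq (by fun_prop) continuous_const))
    (isBounded_iff_forall_norm_le.2 ⟨c / r, fun w ⟨hw, hqw⟩ => ?_⟩)
  rw [le_div_iff₀' hr, ← hqw]
  exact mul_norm_le_inner_of_closedBall hr.le fun x hx => hw (hball hx)

theorem inner_pos_of_mem_interior_innerDual [CompleteSpace E] {s : Set E} {v x : E}
    (hv : v ∈ interior (innerDual s : Set E)) (hx : x ∈ s) (hx0 : x ≠ 0) : 0 < ⟪x, v⟫ := by
  obtain ⟨r, hr, hball⟩ := Metric.nhds_basis_closedBall.mem_iff.1 (mem_interior_iff_mem_nhds.1 hv)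
  rw [real_inner_comm]
  exact (mul_pos hr (norm_pos_iff.2 hx0)).trans_le <| mul_norm_le_inner_of_closedBall hr.le
    fun w hw => (real_inner_comm x w).symm ▸ hball hw hx

theorem span_innerDual_eq_top [FiniteDimensional ℝ E] {K : ProperCone ℝ E}
    (hK : (K : ConvexCone ℝ E).Salient) : Submodule.span ℝ (innerDual (K : Set E) : Set E) = ⊤ := by
  rw [← Submodule.orthogonal_eq_bot_iff, Submodule.eq_bot_iff]
  intro x hx
  have horth : ∀ w ∈ innerDual (K : Set E), ⟪w, x⟫ = 0 := fun w hw =>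
    hx w (Submodule.subset_span hw)
  have hmem : x ∈ K := by
    rw [← innerDual_innerDual K]
    exact fun w hw => (horth w hw).ge
  have hneg : -x ∈ K := by
    rw [← innerDual_innerDual K]
    exact fun w hw => (by rw [inner_neg_right, horth w hw, neg_zero] : ⟪w, -x⟫ = 0).ge
  exact by_contra fun hx0 => hK x hmem hx0 hneg

theorem interior_innerDual_nonempty [FiniteDimensional ℝ E] {K : ProperCone ℝ E}
    (hK : (K : ConvexCone ℝ E).Salient) : (interior (innerDual (K : Set E) : Set E)).Nonempty := by
  rw [(innerDual (K : Set E)).convex.interior_nonempty_iff_affineSpan_eq_top,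
    AffineSubspace.affineSpan_eq_top_iff_vectorSpan_eq_top_of_nonempty ℝ E E
      (innerDual (K : Set E)).nonempty,
    vectorSpan_eq_span_vsub_set_right ℝ
      (show (0 : E) ∈ (innerDual (K : Set E) : Set E) from zero_mem _)]
  simpa using span_innerDual_eq_top hK

end InnerDual

section ConeVolume

variable {n : ℕ} {C : Set (EuclideanSpace ℝ (Fin (n + 1)))}
  {q v x y : EuclideanSpace ℝ (Fin (n + 1))}

namespace IsCone

theorem smul_mem (hC : IsCone C) {t : ℝ} (ht : 0 < t) (hx : x ∈ C) : t • x ∈ C :=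
  hC t ht ▸ Set.smul_mem_smul_set hx

protected theorem closure (hC : IsCone C) : IsCone (closure C) := fun t ht => by
  rw [← closure_smul₀' ht.ne', hC t ht]

theorem add_mem (hC : IsCone C) (hconv : Convex ℝ C) (hx : x ∈ C) (hy : y ∈ C) : x + y ∈ C := by
  have hmid := hC.smul_mem two_pos (hconv.midpoint_mem hx hy)
  rwa [midpoint_eq_smul_add, smul_smul, invOf_eq_inv, mul_inv_cancel₀ two_ne_zero, one_smul] at hmid

theorem add_mem_of_mem_closure (hC : IsCone C) (hCo : IsOpen C) (hconv : Convex ℝ C)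
    (hx : x ∈ closure C) (hy : y ∈ C) : x + y ∈ C := by
  have hmid := hconv.combo_closure_interior_mem_interior hx (hCo.interior_eq.symm ▸ hy)
    (inv_nonneg.2 zero_le_two) (inv_pos.2 two_pos) (by norm_num)
  rw [hCo.interior_eq, ← smul_add] at hmid
  simpa [smul_smul] using hC.smul_mem two_pos hmid

theorem exists_pos_mul_norm_le_inner (hC : IsCone C) (hv : v ∈ DualCone C) :
    ∃ c > 0, ∀ x ∈ closure C, c * ‖x‖ ≤ ⟪x, v⟫ := by
  have hcompact : IsCompact (closure C ∩ Metric.sphere 0 1) :=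
    (isCompact_sphere 0 1).inter_left isClosed_closure
  obtain ⟨c, hc, hbound⟩ := hcompact.exists_forall_le' (f := fun x => ⟪x, v⟫) (by fun_prop)
    fun x hx => hv x hx.1 (ne_zero_of_mem_unit_sphere ⟨x, hx.2⟩)
  refine ⟨c, hc, fun x hx => ?_⟩
  rcases eq_or_ne x 0 with rfl | hx0
  · simp
  have hx' : 0 < ‖x‖ := norm_pos_iff.2 hx0
  have hunit := hbound (‖x‖⁻¹ • x)
    ⟨hC.closure.smul_mem (inv_pos.2 hx') hx, by simp [norm_smul, hx'.ne']⟩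
  rwa [real_inner_smul_left, le_inv_mul_iff₀ hx', mul_comm] at hunit

theorem isOpen_dualCone (hC : IsCone C) : IsOpen (DualCone C) := by
  refine Metric.isOpen_iff.2 fun v hv => ?_
  obtain ⟨c, hc, hbound⟩ := hC.exists_pos_mul_norm_le_inner hv
  refine ⟨c, hc, fun w hw x hx hx0 => ?_⟩
  have hdist : ‖x‖ * ‖v - w‖ < ‖x‖ * c :=
    mul_lt_mul_of_pos_left (mem_ball_iff_norm'.1 hw) (norm_pos_iff.2 hx0)
  have hsub := inner_sub_right (𝕜 := ℝ) x v w
  linarith [hbound x hx, real_inner_le_norm x (v - w)]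

theorem dualCone_nonempty (hC : IsCone C) (hconv : Convex ℝ C) (hsharp : IsSharp C)
    (hne : C.Nonempty) : (DualCone C).Nonempty := by
  let K₀ : ConvexCone ℝ (EuclideanSpace ℝ (Fin (n + 1))) :=
    { carrier := closure C
      smul_mem' := fun _ ht _ => hC.closure.smul_mem ht
      add_mem' := fun _ hx _ => hC.closure.add_mem hconv.closure hx }
  have hK₀ : K₀.Salient := fun x hx hx0 => hsharp x hx0 hx
  obtain ⟨K, hK⟩ : ∃ K : ProperCone ℝ (EuclideanSpace ℝ (Fin (n + 1))), (K : ConvexCone ℝ _) = K₀ :=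
    CanLift.prf K₀ ⟨hne.closure, isClosed_closure⟩
  obtain ⟨v, hv⟩ := interior_innerDual_nonempty (K := K) (hK ▸ hK₀)
  have hcarrier : (K : Set _) = closure C := congrArg SetLike.coe hK
  exact ⟨v, fun x hx => inner_pos_of_mem_interior_innerDual hv (hcarrier.symm ▸ hx)⟩

end IsCone

theorem convex_dualCone : Convex ℝ (DualCone C) := by
  simp only [DualCone, Set.ofPred_forall]
  exact convex_iInter₂ fun x _ => convex_iInter fun _ =>
    convex_halfSpace_gt (innerₗ _ x).isLinear 0

theorem inner_pos_of_mem_dualCone (hCo : IsOpen C) (hv : v ∈ DualCone C) (hx : x ∈ C) :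
    0 < ⟪x, v⟫ := by
  refine hv x (subset_closure hx) fun hx0 => ?_
  have hnhds : C ∩ -C ∈ 𝓝[≠] 0 := by
    have hC : C ∈ 𝓝 0 := hCo.mem_nhds (hx0 ▸ hx)
    exact mem_nhdsWithin_of_mem_nhds (inter_mem hC (by simpa using neg_mem_nhds_zero _ hC))
  obtain ⟨y, ⟨hy, hy_neg⟩, hy0⟩ := NeBot.nonempty_of_mem inferInstance
    (inter_mem hnhds self_mem_nhdsWithin)
  have hpos := hv y (subset_closure hy) hy0
  have hneg := hv (-y) (subset_closure hy_neg) (neg_ne_zero.2 hy0)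
  rw [inner_neg_left] at hneg
  linarith

theorem laplaceTransform_volume_restrict (hCo : IsOpen C) (hC : IsCone C) (hv : v ∈ DualCone C) :
    laplaceTransform (volume.restrict C) v =
      (n + 1)! * volume (C ∩ {x | ⟪x, v⟫ ∈ Set.Ioc (0 : ℝ) 1}) := by
  have h := lintegral_exp_neg_eq_factorial_mul_measure (μ := volume) (f := fun x => ⟪x, v⟫) hC
    (by fun_prop) (fun t _ x => real_inner_smul_left x v t)
    fun x hx => inner_pos_of_mem_dualCone hCo hv hx
  rwa [finrank_euclideanSpace_fin] at h

theorem volume_inter_inner_Ioc_ne_top (hC : IsCone C) (hv : v ∈ DualCone C) :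
    volume (C ∩ {x | ⟪x, v⟫ ∈ Set.Ioc (0 : ℝ) 1}) ≠ ∞ := by
  obtain ⟨c, hc, hbound⟩ := hC.exists_pos_mul_norm_le_inner hv
  have hbdd : Bornology.IsBounded (C ∩ {x | ⟪x, v⟫ ∈ Set.Ioc (0 : ℝ) 1}) :=
    isBounded_iff_forall_norm_le.2 ⟨1 / c, fun x ⟨hx, hxv⟩ =>
      (le_div_iff₀' hc).2 ((hbound x (subset_closure hx)).trans hxv.2)⟩
  exact hbdd.measure_lt_top.ne

theorem coneVolume_nonneg : 0 ≤ coneVolume C v := ENNReal.toReal_nonneg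

theorem laplaceTransform_eq_ofReal_factorial_mul_coneVolume (hCo : IsOpen C) (hC : IsCone C)
    (hv : v ∈ DualCone C) :
    laplaceTransform (volume.restrict C) v = ENNReal.ofReal ((n + 1)! * coneVolume C v) := by
  rw [laplaceTransform_volume_restrict hCo hC hv, ENNReal.ofReal_mul (Nat.cast_nonneg _),
    ENNReal.ofReal_natCast, coneVolume, ENNReal.ofReal_toReal (volume_inter_inner_Ioc_ne_top hC hv)]

theorem laplaceTransform_eq_top_of_notMem_dualCone (hCo : IsOpen C) (hC : IsCone C)
    (hconv : Convex ℝ C) (hne : C.Nonempty) (hv : v ∉ DualCone C) :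
    laplaceTransform (volume.restrict C) v = ∞ := by
  obtain ⟨x, hx, hx0, hxv⟩ : ∃ x ∈ closure C, x ≠ 0 ∧ ⟪x, v⟫ ≤ 0 := by
    simpa [DualCone] using hv
  obtain ⟨p, hp⟩ := hne
  have htruncation : volume ({y | ⟪y, v⟫ < ⟪p, v⟫ + 1} ∩ C) = ∞ := by
    refine measure_eq_top_of_forall_add_mem
      ((isOpen_lt (by fun_prop) continuous_const).inter hCo) ⟨p, lt_add_one ⟪p, v⟫, hp⟩ hx0
      fun y ⟨hyv, hy⟩ => ⟨?_, hC.add_mem_of_mem_closure hCo hconv hx hy⟩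
    simp only [Set.mem_ofPred_eq, inner_add_left] at hyv ⊢
    linarith
  refine laplaceTransform_eq_top_of_measure_eq_top (c := ⟪p, v⟫ + 1) (top_unique ?_)
  rw [← htruncation, Measure.restrict_apply' hCo.measurableSet]
  exact measure_mono (Set.inter_subset_inter_left _ fun y (hy : ⟪y, v⟫ < _) => hy.le)

theorem setOf_laplaceTransform_ne_top_eq_dualCone (hCo : IsOpen C) (hC : IsCone C)
    (hconv : Convex ℝ C) (hne : C.Nonempty) :
    {v | laplaceTransform (volume.restrict C) v ≠ ∞} = DualCone C :=
  Set.Subset.antisymm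
    (fun _ => not_imp_comm.1 (laplaceTransform_eq_top_of_notMem_dualCone hCo hC hconv hne))
    fun _ hv => (laplaceTransform_eq_ofReal_factorial_mul_coneVolume hCo hC hv).trans_ne
      ENNReal.ofReal_ne_top

theorem strictConvexOn_coneVolume (hCo : IsOpen C) (hC : IsCone C) (hconv : Convex ℝ C)
    (hne : C.Nonempty) : StrictConvexOn ℝ (DualCone C) (coneVolume C) := by
  have hL := strictConvexOn_toReal_laplaceTransform fun u hu =>
    measure_restrict_inner_ne_zero (hCo.measure_pos volume hne).ne' hu
  rw [setOf_laplaceTransform_ne_top_eq_dualCone hCo hC hconv hne] at hL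
  have hscaled : StrictConvexOn ℝ (DualCone C) fun v => ((n + 1)! : ℝ) * coneVolume C v :=
    hL.congr fun v hv => by
      simp only [laplaceTransform_eq_ofReal_factorial_mul_coneVolume hCo hC hv]
      exact ENNReal.toReal_ofReal (mul_nonneg (Nat.cast_nonneg _) coneVolume_nonneg)
  refine ⟨hscaled.1, fun v hv w hw hvw a b ha hb hab => ?_⟩
  refine lt_of_mul_lt_mul_left (a := ((n + 1)! : ℝ)) ?_ (Nat.cast_nonneg _)
  simpa only [smul_eq_mul, mul_add, mul_left_comm] using hscaled.2 hv hw hvw ha hb hab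

theorem tendsto_coneVolume_atTop_of_notMem_dualCone (hCo : IsOpen C) (hC : IsCone C)
    (hconv : Convex ℝ C) (hne : C.Nonempty) {ψ : EuclideanSpace ℝ (Fin (n + 1))}
    (hψ : ψ ∉ DualCone C) :
    Tendsto (coneVolume C) (𝓝[DualCone C] ψ) atTop := by
  have hL : Tendsto (laplaceTransform (volume.restrict C)) (𝓝[DualCone C] ψ) (𝓝 ∞) := by
    refine ENNReal.tendsto_nhds_top_iff_nnreal.2 fun M => mem_nhdsWithin_of_mem_nhds ?_
    refine lowerSemicontinuous_laplaceTransform _ ψ M (ENNReal.coe_lt_top.trans_eq ?_)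
    exact (laplaceTransform_eq_top_of_notMem_dualCone hCo hC hconv hne hψ).symm
  have hscaled := ENNReal.tendsto_ofReal_nhds_top.1 <| hL.congr' <|
    eventually_mem_nhdsWithin.mono fun v =>
      laplaceTransform_eq_ofReal_factorial_mul_coneVolume hCo hC
  exact (tendsto_const_mul_atTop_of_pos (by positivity)).1 hscaled

theorem slice_dualCone_nonempty (hCo : IsOpen C) (hC : IsCone C) (hconv : Convex ℝ C)
    (hsharp : IsSharp C) (hq : q ∈ C) : {w ∈ DualCone C | ⟪q, w⟫ = 1}.Nonempty := by
  obtain ⟨v, hv⟩ := hC.dualCone_nonempty hconv hsharp ⟨q, hq⟩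
  have hqv := inner_pos_of_mem_dualCone hCo hv hq
  refine ⟨⟪q, v⟫⁻¹ • v, fun x hx hx0 => ?_, ?_⟩
  · rw [real_inner_smul_right]
    exact mul_pos (inv_pos.2 hqv) (hv x hx hx0)
  · rw [real_inner_smul_right, inv_mul_cancel₀ hqv.ne']

theorem exists_isMinOn_coneVolume_slice (hCo : IsOpen C) (hC : IsCone C) (hconv : Convex ℝ C)
    (hsharp : IsSharp C) (hq : q ∈ C) :
    ∃ v ∈ {w ∈ DualCone C | ⟪q, w⟫ = 1},
      IsMinOn (coneVolume C) {w ∈ DualCone C | ⟪q, w⟫ = 1} v := by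
  obtain ⟨v₀, hv₀, hqv₀⟩ := slice_dualCone_nonempty hCo hC hconv hsharp hq
  have hsub : DualCone C ⊆ ProperCone.innerDual C := fun w hw x hx =>
    (inner_pos_of_mem_dualCone hCo hw hx).le
  have hnonempty : {w ∈ (ProperCone.innerDual C : Set _) | ⟪q, w⟫ = 1}.Nonempty :=
    ⟨v₀, hsub hv₀, hqv₀⟩
  have hcompact := isCompact_slice_innerDual (mem_interior_iff_mem_nhds.2 (hCo.mem_nhds hq)) 1
  obtain ⟨v, ⟨-, hqv⟩, hmin⟩ := LowerSemicontinuousOn.exists_isMinOn hnonempty hcompact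
    ((lowerSemicontinuous_laplaceTransform (volume.restrict C)).lowerSemicontinuousOn _)
  have hdomain := setOf_laplaceTransform_ne_top_eq_dualCone hCo hC hconv ⟨q, hq⟩
  have hv : v ∈ DualCone C := by
    have hle := isMinOn_iff.1 hmin v₀ ⟨hsub hv₀, hqv₀⟩
    rw [← hdomain] at hv₀ ⊢
    exact ne_top_of_le_ne_top hv₀ hle
  refine ⟨v, ⟨hv, hqv⟩, fun w ⟨hw, hqw⟩ => ?_⟩
  have hle : laplaceTransform (volume.restrict C) v ≤ laplaceTransform (volume.restrict C) w :=
    isMinOn_iff.1 hmin w ⟨hsub hw, hqw⟩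
  rw [laplaceTransform_eq_ofReal_factorial_mul_coneVolume hCo hC hv,
    laplaceTransform_eq_ofReal_factorial_mul_coneVolume hCo hC hw, ENNReal.ofReal_le_ofReal_iff
      (mul_nonneg (Nat.cast_nonneg _) coneVolume_nonneg)] at hle
  exact le_of_mul_le_mul_left hle (by positivity)

end ConeVolume

/-- **Properness of the volume function and unique minimum on slices.** For an open
properly convex cone `C ⊂ ℝ^{n+1}`: (a) `V(φ) → ∞` as `φ` approaches any point of the
frontier of the dual cone from within `C*`; (b) for any `q ∈ C`, the restriction of `V`
to the affine slice `C*_q = {φ ∈ C* : φ(q) = 1}` attains a unique minimum. -/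
theorem coneVolume_proper_and_unique_min (n : ℕ) (C : Set (EuclideanSpace ℝ (Fin (n+1))))
    (hCo : IsOpen C) (hCc : IsCone C) (hconv : Convex ℝ C) (hsharp : IsSharp C)
    (hne : C.Nonempty) :
    (∀ ψ ∈ frontier (DualCone C),
      Tendsto (coneVolume C) (nhdsWithin ψ (DualCone C)) atTop) ∧
    (∀ q ∈ C, ∃! v, v ∈ {w ∈ DualCone C | ⟪q, w⟫ = 1} ∧
      IsMinOn (coneVolume C) {w ∈ DualCone C | ⟪q, w⟫ = 1} v) := by
  refine ⟨fun ψ hψ => ?_, fun q hq => ?_⟩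
  · have hψ' : ψ ∉ DualCone C := hCc.isOpen_dualCone.interior_eq ▸ hψ.2
    exact tendsto_coneVolume_atTop_of_notMem_dualCone hCo hCc hconv hne hψ'
  · obtain ⟨v, hv, hmin⟩ := exists_isMinOn_coneVolume_slice hCo hCc hconv hsharp hq
    have hslice : Convex ℝ {w ∈ DualCone C | ⟪q, w⟫ = 1} :=
      convex_dualCone.inter (convex_hyperplane (innerₗ _ q).isLinear 1)
    have hstrict : StrictConvexOn ℝ {w ∈ DualCone C | ⟪q, w⟫ = 1} (coneVolume C) :=
      (strictConvexOn_coneVolume hCo hCc hconv hne).subset (Set.sep_subset _ _) hslice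
    exact ⟨v, ⟨hv, hmin⟩, fun w ⟨hw, hminw⟩ => hstrict.eq_of_isMinOn hminw hmin hw hv⟩
end

section
/- Let Ω ⊂ RP^n be an open properly convex domain and p ∈ Ω. Then there exists an affine patch R^n ⊂ RP^n containing Ω (i.e., a projective hyperplane disjoint from cl Ω) such that p is the centroid of Ω regarded as a bounded convex body in that affine patch. -/
open MeasureTheory Pointwise
open scoped RealInnerProductSpace

/-!
Let `φ` range over the functionals that are nonnegative on the cone `C` and satisfy `φ x₀ = 1`;
they form a compact set. The volume of the solid `{x ∈ C | φ x ≤ 1}` is lower semicontinuous in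
`φ`, so it has a minimiser. It is infinite as soon as `φ` vanishes at a nonzero `u` in the
closure of `C`, since the solid is then stable under translation by `u`; hence the minimiser is
positive on the closure of `C` away from `0`. The derivative of the volume in a direction `ψ`
with `ψ x₀ = 0` is proportional to the integral of `ψ` over the solid. At the minimiser all
these integrals vanish, which says that the centroid of the solid is a multiple of `x₀`.
-/

open Filter Metric Topology ENNReal

section Cone

variable {E : Type*} [NormedAddCommGroup E] [NormedSpace ℝ E]

lemma zero_notMem_of_isOpen_of_salient_closure [Nontrivial E] {C : ConvexCone ℝ E}
    (hC : IsOpen (C : Set E)) (hsal : C.closure.Salient) : (0 : E) ∉ C := by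
  intro h0
  obtain ⟨e, he⟩ := exists_ne (0 : E)
  have small_mem (u : E) : ∀ᶠ t : ℝ in 𝓝[>] 0, t • u ∈ C :=
    nhdsWithin_le_nhds <| (by fun_prop : Continuous fun t : ℝ ↦ t • u).continuousAt.eventually_mem
      (hC.mem_nhds (by simpa using h0))
  have mem (u : E) : u ∈ C := by
    obtain ⟨t, htu, ht⟩ := ((small_mem u).and self_mem_nhdsWithin).exists
    exact (C.smul_mem_iff ht).1 htu
  exact hsal e (subset_closure (mem e)) he (subset_closure (mem (-e)))

lemma add_mem_of_isOpen_of_mem_closure {C : ConvexCone ℝ E} (hC : IsOpen (C : Set E)) {x y : E}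
    (hx : x ∈ C) (hy : y ∈ closure (C : Set E)) : x + y ∈ C := by
  have h : x + y ∈ (C : Set E) + closure C := Set.add_mem_add hx hy
  rw [hC.add_closure] at h
  obtain ⟨a, ha, b, hb, hab⟩ := h
  exact hab ▸ C.add_mem ha hb

lemma exists_mul_norm_le_of_pos [FiniteDimensional ℝ E] {K : ConvexCone ℝ E}
    (hK : IsClosed (K : Set E)) {φ : StrongDual ℝ E} (hφ : ∀ x ∈ K, x ≠ 0 → 0 < φ x) :
    ∃ c : ℝ, 0 < c ∧ ∀ x ∈ K, c * ‖x‖ ≤ φ x := by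
  obtain ⟨c, hc, hcφ⟩ := ((isCompact_sphere (0 : E) 1).inter_left hK).exists_forall_le'
    φ.continuous.continuousOn
    fun x hx ↦ hφ x hx.1 (ne_zero_of_mem_unit_sphere ⟨x, hx.2⟩)
  refine ⟨c, hc, fun x hx ↦ ?_⟩
  obtain rfl | hx0 := eq_or_ne x 0
  · simp
  have hnorm : 0 < ‖x‖ := norm_pos_iff.2 hx0
  have h := hcφ (‖x‖⁻¹ • x) ⟨K.smul_mem (inv_pos.2 hnorm) hx, by simp [norm_smul, hx0]⟩
  rwa [map_smul, smul_eq_mul, inv_mul_eq_div, le_div_iff₀ hnorm] at h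

lemma exists_dual_pos_of_salient [FiniteDimensional ℝ E] (K : ProperCone ℝ E)
    (hK : (K : ConvexCone ℝ E).Salient) :
    ∃ φ : StrongDual ℝ E, ∀ x ∈ K, x ≠ 0 → 0 < φ x := by
  have hcomp : IsCompact ((K : Set E) ∩ sphere 0 1) := (isCompact_sphere _ _).inter_left K.isClosed
  obtain ⟨φ, hφ⟩ : ∃ φ : StrongDual ℝ E,
      ∀ x ∈ K, 0 ≤ φ x ∧ (x ∈ (K : Set E) ∩ sphere 0 1 → 0 < φ x) := by
    refine hcomp.induction_on
      (p := fun S ↦ ∃ φ : StrongDual ℝ E, ∀ x ∈ K, 0 ≤ φ x ∧ (x ∈ S → 0 < φ x)) ⟨0, by simp⟩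
      (fun S T hST ⟨φ, hφ⟩ ↦ ⟨φ, fun x hx ↦ (hφ x hx).imp_right fun h hxS ↦ h (hST hxS)⟩) ?_ ?_
    · rintro S T ⟨φ, hφ⟩ ⟨φ', hφ'⟩
      refine ⟨φ + φ', fun x hx ↦ ⟨add_nonneg (hφ x hx).1 (hφ' x hx).1, ?_⟩⟩
      rintro (hxS | hxT)
      · exact add_pos_of_pos_of_nonneg ((hφ x hx).2 hxS) (hφ' x hx).1
      · exact add_pos_of_nonneg_of_pos (hφ x hx).1 ((hφ' x hx).2 hxT)
    · rintro x ⟨hxK, hx⟩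
      obtain ⟨φ, hφK, hφx⟩ := K.hyperplane_separation_point
        (hK x hxK (ne_zero_of_mem_unit_sphere ⟨x, hx⟩))
      refine ⟨{y | 0 < φ y}, mem_nhdsWithin_of_mem_nhds ?_, φ, fun y hy ↦ ⟨hφK y hy, id⟩⟩
      exact (isOpen_lt continuous_const φ.continuous).mem_nhds (by simpa using hφx)
  refine ⟨φ, fun x hx hx0 ↦ ?_⟩
  have hnorm : 0 < ‖x‖⁻¹ := by positivity
  have hxK : ‖x‖⁻¹ • x ∈ K := K.smul_mem hx hnorm.le
  have h := (hφ _ hxK).2 ⟨hxK, by simp [norm_smul, hx0]⟩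
  rw [map_smul, smul_eq_mul] at h
  exact pos_of_mul_pos_right h hnorm.le

end Cone

section DualSlice

variable {E : Type*} [NormedAddCommGroup E] [NormedSpace ℝ E]

/-- The slice at height one of the dual cone of `C`: the functionals that are nonnegative on `C`
and normalised by `φ x₀ = 1`. -/
def dualSlice (C : Set E) (x₀ : E) : Set (StrongDual ℝ E) :=
  {φ | φ x₀ = 1 ∧ ∀ x ∈ C, 0 ≤ φ x}

lemma isCompact_dualSlice [FiniteDimensional ℝ E] {C : Set E} {x₀ : E} (hC : C ∈ 𝓝 x₀) :
    IsCompact (dualSlice C x₀) := by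
  obtain ⟨r, hr, hrC⟩ := nhds_basis_closedBall.mem_iff.1 hC
  refine isCompact_of_isClosed_isBounded ?_ <|
    (isBounded_closedBall (x := 0) (r := 1 / r)).subset ?_
  · simp only [dualSlice, Set.ofPred_and, Set.ofPred_forall]
    exact (isClosed_eq (by fun_prop) continuous_const).inter <|
      isClosed_biInter fun x _ ↦ isClosed_le continuous_const (by fun_prop)
  · rintro φ ⟨hφx₀, hφC⟩
    rw [mem_closedBall_zero_iff]
    refine φ.opNorm_bound_of_ball_bound hr 1 fun z hz ↦ abs_le.2 ?_
    rw [mem_closedBall_zero_iff] at hz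
    have hadd := hφC (x₀ + z) (hrC (by simpa using hz))
    have hsub := hφC (x₀ - z) (hrC (by simpa using hz))
    rw [map_add, hφx₀] at hadd
    rw [map_sub, hφx₀] at hsub
    constructor <;> linarith

lemma pos_of_mem_dualSlice {C : Set E} (hC : IsOpen C) {x₀ x : E} {φ : StrongDual ℝ E}
    (hφ : φ ∈ dualSlice C x₀) (hx : x ∈ C) : 0 < φ x := by
  have hnear : ∀ᶠ t : ℝ in 𝓝[>] 0, x - t • x₀ ∈ C :=
    nhdsWithin_le_nhds <| (by fun_prop : Continuous fun t : ℝ ↦ x - t • x₀).continuousAt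
      |>.eventually_mem (hC.mem_nhds (by simpa using hx))
  obtain ⟨t, htC, ht⟩ := (hnear.and self_mem_nhdsWithin).exists
  have h := hφ.2 _ htC
  rw [map_sub, map_smul, hφ.1, smul_eq_mul, mul_one] at h
  exact ht.trans_le (sub_nonneg.1 h)

lemma exists_mem_dualSlice_pos [FiniteDimensional ℝ E] {C : ConvexCone ℝ E}
    (hsal : C.closure.Salient) {x₀ : E} (hx₀ : x₀ ∈ C) (hne : x₀ ≠ 0) :
    ∃ φ ∈ dualSlice (C : Set E) x₀, ∀ x ∈ closure (C : Set E), x ≠ 0 → 0 < φ x := by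
  obtain ⟨K, hK⟩ := CanLift.prf (β := ProperCone ℝ E) C.closure
    ⟨⟨x₀, subset_closure hx₀⟩, isClosed_closure⟩
  obtain ⟨φ, hφ⟩ := exists_dual_pos_of_salient K (hK ▸ hsal)
  have hpos (x : E) (hx : x ∈ closure (C : Set E)) : x ≠ 0 → 0 < φ x :=
    hφ x (show x ∈ (K : ConvexCone ℝ E) from hK ▸ hx)
  have hx₀pos : 0 < φ x₀ := hpos x₀ (subset_closure hx₀) hne
  have hpos_smul (x : E) (hx : x ∈ closure (C : Set E)) (hx0 : x ≠ 0) : 0 < ((φ x₀)⁻¹ • φ) x :=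
    mul_pos (inv_pos.2 hx₀pos) (hpos x hx hx0)
  refine ⟨(φ x₀)⁻¹ • φ, ⟨inv_mul_cancel₀ hx₀pos.ne', fun x hx ↦ ?_⟩, hpos_smul⟩
  obtain rfl | hx0 := eq_or_ne x 0
  · simp
  · exact (hpos_smul x (subset_closure hx) hx0).le

lemma inter_setOf_apply_le_one_subset_closedBall {C : Set E} {φ : StrongDual ℝ E} {c R : ℝ}
    (hc : 0 < c) (hφ : ∀ x ∈ C, c * ‖x‖ ≤ φ x) (hR : 1 / c ≤ R) :
    C ∩ {x | φ x ≤ 1} ⊆ closedBall 0 R := by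
  rintro x ⟨hxC, hx⟩
  rw [mem_closedBall_zero_iff]
  exact ((le_div_iff₀' hc).2 ((hφ x hxC).trans hx)).trans hR

lemma eventually_mul_norm_le_add_smul {C : Set E} {φ : StrongDual ℝ E} {b c : ℝ} (hbc : b < c)
    (hφ : ∀ x ∈ C, c * ‖x‖ ≤ φ x) (ψ : StrongDual ℝ E) :
    ∀ᶠ ε : ℝ in 𝓝 0, ∀ x ∈ C, b * ‖x‖ ≤ (φ + ε • ψ) x := by
  have hsmall : ∀ᶠ ε : ℝ in 𝓝 0, ‖ε • ψ‖ < c - b :=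
    (by fun_prop : Continuous fun ε : ℝ ↦ ‖ε • ψ‖).continuousAt.eventually_lt_const
      (by simpa using hbc)
  filter_upwards [hsmall] with ε hε x hx
  have hψ : -(‖ε • ψ‖ * ‖x‖) ≤ (ε • ψ) x := (abs_le.1 ((ε • ψ).le_opNorm x)).1
  rw [add_apply]
  nlinarith [hφ x hx, norm_nonneg x]

lemma eq_smul_of_forall_dual_eq_zero {φ : StrongDual ℝ E} {x₀ y : E} (hφ : φ x₀ = 1)
    (h : ∀ ψ : StrongDual ℝ E, ψ x₀ = 0 → ψ y = 0) : y = φ y • x₀ := by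
  refine SeparatingDual.eq_iff_forall_dual_eq (R := ℝ).2 fun ψ ↦ ?_
  have hψ := h (ψ - ψ x₀ • φ) (by simp [hφ])
  simpa [sub_eq_zero, mul_comm] using hψ

end DualSlice

section Measure

lemma integrableOn_of_continuous_of_isBounded {X F : Type*} [MetricSpace X] [ProperSpace X]
    [MeasurableSpace X] [OpensMeasurableSpace X] [NormedAddCommGroup F] {μ : Measure X}
    [IsFiniteMeasureOnCompacts μ] {f : X → F} (hf : Continuous f) {s : Set X}
    (hs : Bornology.IsBounded s) : IntegrableOn f s μ :=
  (hf.continuousOn.integrableOn_compact hs.isCompact_closure).mono_set subset_closure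

variable {E : Type*} [NormedAddCommGroup E] [NormedSpace ℝ E] [MeasurableSpace E] [BorelSpace E]

lemma measure_eq_top_of_forall_add_mem_s16 (μ : Measure E) [μ.IsAddLeftInvariant] [μ.IsOpenPosMeasure]
    {A : Set E} (hA : IsOpen A) (hne : A.Nonempty) {u : E} (hu : u ≠ 0)
    (hadd : ∀ x ∈ A, x + u ∈ A) : μ A = ∞ := by
  obtain ⟨z, hz⟩ := hne
  have hA_add (k : ℕ) : ∀ x ∈ A, x + k • u ∈ A := by
    induction k with
    | zero => simp
    | succ k ih => exact fun x hx ↦ by simpa [succ_nsmul, add_assoc] using hadd _ (ih x hx)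
  obtain ⟨r, hr, hrA⟩ := Metric.isOpen_iff.1 hA z hz
  set s : ℝ := min r (‖u‖ / 2)
  have hspos : 0 < s := lt_min hr (by positivity)
  have hsub (k : ℕ) : ball (z + k • u) s ⊆ A := by
    intro y hy
    have hy' : y - k • u ∈ ball z r := by
      rw [mem_ball_iff_norm] at hy ⊢
      rw [sub_right_comm, sub_sub]
      exact hy.trans_le (min_le_left _ _)
    simpa using hA_add k _ (hrA hy')
  have hdisj : Pairwise (Function.onFun Disjoint fun k : ℕ ↦ ball (z + k • u) s) := by
    intro i j hij
    apply ball_disjoint_ball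
    have hij' : (1 : ℝ) ≤ |(i : ℝ) - j| := by
      exact_mod_cast Int.one_le_abs (sub_ne_zero.2 (Nat.cast_injective.ne hij) : (i : ℤ) - j ≠ 0)
    calc s + s ≤ 1 * ‖u‖ := by linarith [min_le_right r (‖u‖ / 2)]
      _ ≤ |(i : ℝ) - j| * ‖u‖ := by gcongr
      _ = dist (z + i • u) (z + j • u) := by
        rw [dist_add_left, dist_eq_norm, ← Nat.cast_smul_eq_nsmul ℝ, ← Nat.cast_smul_eq_nsmul ℝ,
          ← sub_smul, norm_smul, Real.norm_eq_abs]
  refine eq_top_mono (measure_mono (Set.iUnion_subset hsub)) ?_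
  rw [measure_iUnion hdisj fun _ ↦ measurableSet_ball]
  have hball (k : ℕ) : μ (ball (z + k • u) s) = μ (ball z s) := by
    rw [← measure_preimage_add μ (k • u), preimage_add_ball, add_sub_cancel_right]
  simp_rw [hball]
  exact ENNReal.tsum_const_eq_top_of_ne_zero (measure_ball_pos μ z hspos).ne'

end Measure

section TentVolume

variable {E : Type*} [NormedAddCommGroup E] [NormedSpace ℝ E] [MeasurableSpace E] [BorelSpace E]

/-- The volume of the region between `C` and the graph of the positive part of `1 - φ`. When `C` is
a cone it is proportional to the volume of `{x ∈ C | φ x ≤ 1}`, but, unlike the latter, it is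
written as an integral of functions that depend continuously on `φ`. -/
noncomputable def tentVolume (μ : Measure E) (C : Set E) (φ : StrongDual ℝ E) : ℝ≥0∞ :=
  ∫⁻ x in C, ENNReal.ofReal (1 - φ x) ∂μ

lemma lowerSemicontinuous_tentVolume (μ : Measure E) (C : Set E) :
    LowerSemicontinuous (tentVolume μ C) := by
  refine lowerSemicontinuous_iff_le_liminf.2 fun φ ↦ ?_
  have hcont (x : E) : Continuous fun φ : StrongDual ℝ E ↦ ENNReal.ofReal (1 - φ x) :=
    ENNReal.continuous_ofReal.comp (by fun_prop)
  calc tentVolume μ C φ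
      = ∫⁻ x in C, liminf (fun φ' : StrongDual ℝ E ↦ ENNReal.ofReal (1 - φ' x)) (𝓝 φ) ∂μ :=
        lintegral_congr fun x ↦ ((hcont x).tendsto φ).liminf_eq.symm
    _ ≤ liminf (tentVolume μ C) (𝓝 φ) := lintegral_liminf_le fun _ ↦ by fun_prop

lemma tentVolume_eq_top (μ : Measure E) [μ.IsAddLeftInvariant] [μ.IsOpenPosMeasure]
    {C : ConvexCone ℝ E} (hC : IsOpen (C : Set E)) (hne : (C : Set E).Nonempty)
    {φ : StrongDual ℝ E} {u : E} (hu : u ∈ closure (C : Set E)) (hu0 : u ≠ 0) (hφu : φ u = 0) :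
    tentVolume μ C φ = ∞ := by
  set A : Set E := (C : Set E) ∩ {x | φ x < 1 / 2}
  have hAopen : IsOpen A := hC.inter (isOpen_lt (by fun_prop) continuous_const)
  have hAne : A.Nonempty := by
    obtain ⟨x, hx⟩ := hne
    obtain ⟨t, ht, htx⟩ := exists_pos_mul_lt (one_half_pos (α := ℝ)) (φ x)
    exact ⟨t • x, C.smul_mem ht hx, by simpa [mul_comm] using htx⟩
  have hμA : μ A = ∞ := measure_eq_top_of_forall_add_mem_s16 μ hAopen hAne hu0
    fun x hx ↦ ⟨add_mem_of_isOpen_of_mem_closure hC hx.1 hu, by simpa [hφu] using hx.2⟩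
  refine eq_top_mono ?_ (ENNReal.mul_top (a := ENNReal.ofReal (1 / 2)) (by simp))
  calc ENNReal.ofReal (1 / 2) * ∞ = ∫⁻ _ in A, ENNReal.ofReal (1 / 2) ∂μ := by
        rw [setLIntegral_const, hμA]
    _ ≤ ∫⁻ x in A, ENNReal.ofReal (1 - φ x) ∂μ :=
        setLIntegral_mono' hAopen.measurableSet fun x hx ↦ ENNReal.ofReal_le_ofReal <| by
          linarith [hx.2.out]
    _ ≤ tentVolume μ C φ := lintegral_mono_set Set.inter_subset_left

lemma tentVolume_eq_ofReal [FiniteDimensional ℝ E] (μ : Measure E) [IsFiniteMeasureOnCompacts μ]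
    {C : Set E} (hC : MeasurableSet C) {φ : StrongDual ℝ E} {c R : ℝ} (hc : 0 < c)
    (hφ : ∀ x ∈ C, c * ‖x‖ ≤ φ x) (hR : 1 / c ≤ R) :
    tentVolume μ C φ = ENNReal.ofReal (∫ x in C ∩ closedBall 0 R, max (1 - φ x) 0 ∂μ) := by
  have hint : IntegrableOn (fun x ↦ max (1 - φ x) 0) (C ∩ closedBall 0 R) μ :=
    integrableOn_of_continuous_of_isBounded (by fun_prop)
      (isBounded_closedBall.subset Set.inter_subset_right)
  have hzero : Set.EqOn (fun x ↦ ENNReal.ofReal (1 - φ x)) 0 (C \ closedBall 0 R) := by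
    rintro x ⟨hxC, hx⟩
    have hφx : ¬φ x ≤ 1 := fun h ↦ hx (inter_setOf_apply_le_one_subset_closedBall hc hφ hR ⟨hxC, h⟩)
    exact ENNReal.ofReal_of_nonpos (by linarith)
  rw [ofReal_integral_eq_lintegral_ofReal hint (ae_of_all _ fun _ ↦ le_max_right _ _)]
  simp_rw [ENNReal.ofReal_max, ENNReal.ofReal_zero, max_zero]
  rw [tentVolume, ← lintegral_inter_add_sdiff _ C measurableSet_closedBall,
    setLIntegral_eq_zero (hC.diff measurableSet_closedBall) hzero, add_zero]

lemma exists_isMinOn_tentVolume [FiniteDimensional ℝ E] (μ : Measure E) [μ.IsAddHaarMeasure]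
    {C : ConvexCone ℝ E} (hC : IsOpen (C : Set E)) (hsal : C.closure.Salient) {x₀ : E}
    (hx₀ : x₀ ∈ C) (hne : x₀ ≠ 0) :
    ∃ φ ∈ dualSlice (C : Set E) x₀, IsMinOn (tentVolume μ C) (dualSlice C x₀) φ ∧
      ∀ x ∈ closure (C : Set E), x ≠ 0 → 0 < φ x := by
  obtain ⟨φ₁, hφ₁, hpos₁⟩ := exists_mem_dualSlice_pos hsal hx₀ hne
  obtain ⟨c, hc, hcφ₁⟩ := exists_mul_norm_le_of_pos (K := C.closure) isClosed_closure hpos₁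
  have hfin : tentVolume μ C φ₁ < ∞ := by
    rw [tentVolume_eq_ofReal μ hC.measurableSet hc (fun x hx ↦ hcφ₁ x (subset_closure hx)) le_rfl]
    exact ENNReal.ofReal_lt_top
  have hlsc := (lowerSemicontinuous_tentVolume μ C).lowerSemicontinuousOn (dualSlice (C : Set E) x₀)
  obtain ⟨φ, hφ, hmin⟩ :=
    hlsc.exists_isMinOn ⟨φ₁, hφ₁⟩ (isCompact_dualSlice (hC.mem_nhds hx₀))
  refine ⟨φ, hφ, hmin, fun x hx hx0 ↦ ?_⟩
  have hφx : 0 ≤ φ x := le_on_closure hφ.2 (by fun_prop) (by fun_prop) hx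
  refine hφx.lt_of_ne fun h0 ↦ (isMinOn_iff.1 hmin φ₁ hφ₁).not_gt ?_
  rwa [tentVolume_eq_top μ hC ⟨x₀, hx₀⟩ hx hx0 h0.symm]

end TentVolume

section FirstVariation

variable {E : Type*} [NormedAddCommGroup E] [NormedSpace ℝ E]

lemma hasDerivAt_max_one_sub {φ : StrongDual ℝ E} {x : E} (hx : φ x ≠ 1) (ψ : StrongDual ℝ E) :
    HasDerivAt (fun ε : ℝ ↦ max (1 - (φ + ε • ψ) x) 0)
      ({y | φ y ≤ 1}.indicator (fun y ↦ -ψ y) x) 0 := by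
  have hcont : ContinuousAt (fun ε : ℝ ↦ (φ + ε • ψ) x) 0 := by
    fun_prop
  have hφx : (φ + (0 : ℝ) • ψ) x = φ x := by simp
  obtain hlt | hgt := hx.lt_or_gt
  · rw [Set.indicator_of_mem (show x ∈ {y | φ y ≤ 1} from hlt.le)]
    have hlin : HasDerivAt (fun ε : ℝ ↦ 1 - (φ x + ε * ψ x)) (-ψ x) 0 :=
      ((hasDerivAt_mul_const (ψ x)).const_add (φ x)).const_sub 1
    refine hlin.congr_of_eventuallyEq ?_
    filter_upwards [hcont.eventually_lt_const (hφx.trans_lt hlt)] with ε hε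
    exact max_eq_left (sub_nonneg.2 hε.le)
  · rw [Set.indicator_of_notMem (show x ∉ {y | φ y ≤ 1} from hgt.not_ge)]
    refine (hasDerivAt_const 0 (0 : ℝ)).congr_of_eventuallyEq ?_
    filter_upwards [hcont.eventually_const_lt (hgt.trans_eq hφx.symm)] with ε hε
    exact max_eq_right (sub_nonpos.2 hε.le)

lemma lipschitzWith_max_one_sub (φ ψ : StrongDual ℝ E) (x : E) :
    LipschitzWith (Real.nnabs (ψ x)) fun ε : ℝ ↦ max (1 - (φ + ε • ψ) x) 0 := by
  refine LipschitzWith.of_dist_le_mul fun a b ↦ ?_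
  calc dist (max (1 - (φ + a • ψ) x) 0) (max (1 - (φ + b • ψ) x) 0)
      ≤ |(1 - (φ + a • ψ) x) - (1 - (φ + b • ψ) x)| := abs_max_sub_max_le_abs _ _ _
    _ = |ψ x * (b - a)| := by
      congr 1
      simp only [add_apply, smul_apply, smul_eq_mul]
      ring
    _ = Real.nnabs (ψ x) * dist a b := by
      rw [abs_mul, Real.coe_nnabs, dist_comm, Real.dist_eq]

variable [FiniteDimensional ℝ E] [MeasurableSpace E] [BorelSpace E]
  {μ : Measure E} [μ.IsAddHaarMeasure]

lemma ae_dual_apply_ne {φ : StrongDual ℝ E} (hφ : φ ≠ 0) (a : ℝ) : ∀ᵐ x ∂μ, φ x ≠ a := by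
  have hsurj : Function.Surjective (φ : E →ₗ[ℝ] ℝ) :=
    LinearMap.surjective (by exact_mod_cast hφ)
  exact (ae_comp_linearMap_mem_iff (φ : E →ₗ[ℝ] ℝ) μ volume hsurj
    (measurableSet_singleton a).compl).2 (Measure.ae_ne volume a)

lemma hasDerivAt_setIntegral_max_one_sub {K : Set E} (hK : Bornology.IsBounded K)
    {φ : StrongDual ℝ E} (hφ : φ ≠ 0) (ψ : StrongDual ℝ E) :
    HasDerivAt (fun ε : ℝ ↦ ∫ x in K, max (1 - (φ + ε • ψ) x) 0 ∂μ)
      (∫ x in K ∩ {x | φ x ≤ 1}, -ψ x ∂μ) 0 := by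
  have hint {f : E → ℝ} (hf : Continuous f) : IntegrableOn f K μ :=
    integrableOn_of_continuous_of_isBounded hf hK
  have hmeas : MeasurableSet {x | φ x ≤ 1} := measurableSet_le (by fun_prop) (by fun_prop)
  rw [← setIntegral_indicator hmeas]
  exact (hasDerivAt_integral_of_dominated_loc_of_lip univ_mem
    (.of_forall fun ε ↦ (hint (by fun_prop)).aestronglyMeasurable) (hint (by fun_prop))
    ((hint (by fun_prop)).aestronglyMeasurable.indicator hmeas)
    (.of_forall fun x ↦ (lipschitzWith_max_one_sub φ ψ x).lipschitzOnWith)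
    (hint ψ.continuous)
    ((ae_restrict_of_ae (ae_dual_apply_ne hφ 1)).mono fun x hx ↦
      hasDerivAt_max_one_sub hx ψ)).2

lemma setIntegral_eq_zero_of_isMinOn_tentVolume {C : Set E} (hC : MeasurableSet C)
    {x₀ : E} {φ : StrongDual ℝ E} (hφ : φ ∈ dualSlice C x₀)
    (hmin : IsMinOn (tentVolume μ C) (dualSlice C x₀) φ) {c : ℝ} (hc : 0 < c)
    (hcφ : ∀ x ∈ C, c * ‖x‖ ≤ φ x) {ψ : StrongDual ℝ E} (hψ : ψ x₀ = 0) :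
    ∫ x in C ∩ {x | φ x ≤ 1}, ψ x ∂μ = 0 := by
  have hφ0 : φ ≠ 0 := by
    rintro rfl
    simpa using hφ.1
  -- The ball is larger than needed for `φ`, so that it also works for `φ + ε • ψ` with `ε` small.
  let R : ℝ := 1 / (c / 2)
  have hR : 1 / c ≤ R := one_div_le_one_div_of_le (half_pos hc) (half_lt_self hc).le
  let K : Set E := C ∩ closedBall 0 R
  have hlocal : IsLocalMin (fun ε : ℝ ↦ ∫ x in K, max (1 - (φ + ε • ψ) x) 0 ∂μ) 0 := by
    filter_upwards [eventually_mul_norm_le_add_smul (half_lt_self hc) hcφ ψ] with ε hε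
    have hmem : φ + ε • ψ ∈ dualSlice C x₀ :=
      ⟨by simp [hφ.1, hψ], fun x hx ↦ (by positivity : 0 ≤ c / 2 * ‖x‖).trans (hε x hx)⟩
    have hle := isMinOn_iff.1 hmin _ hmem
    rw [tentVolume_eq_ofReal μ hC (half_pos hc) hε le_rfl,
      tentVolume_eq_ofReal μ hC hc hcφ hR] at hle
    simpa [K, R] using
      (ENNReal.ofReal_le_ofReal_iff (integral_nonneg fun _ ↦ le_max_right _ _)).1 hle
  have hzero := hlocal.hasDerivAt_eq_zero
    (hasDerivAt_setIntegral_max_one_sub (isBounded_closedBall.subset Set.inter_subset_right) hφ0 ψ)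
  have hslice : K ∩ {x | φ x ≤ 1} = C ∩ {x | φ x ≤ 1} := by
    rw [Set.inter_right_comm]
    exact Set.inter_eq_left.2 (inter_setOf_apply_le_one_subset_closedBall hc hcφ hR)
  rwa [hslice, integral_neg, neg_eq_zero] at hzero

end FirstVariation

section Centroid

variable {E : Type*} [NormedAddCommGroup E] [NormedSpace ℝ E] [MeasurableSpace E] [BorelSpace E]
  (μ : Measure E)

lemma setIntegral_inter_setOf_apply_le_one_pos [μ.IsOpenPosMeasure] {C : ConvexCone ℝ E}
    (hC : IsOpen (C : Set E)) (hne : (C : Set E).Nonempty) {φ : StrongDual ℝ E}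
    (hpos : ∀ x ∈ C, 0 < φ x) (hint : IntegrableOn φ (C ∩ {x | φ x ≤ 1}) μ) :
    0 < ∫ x in (C : Set E) ∩ {x | φ x ≤ 1}, φ x ∂μ := by
  have hmeas : MeasurableSet ((C : Set E) ∩ {x | φ x ≤ 1}) :=
    hC.measurableSet.inter (measurableSet_le (by fun_prop) (by fun_prop))
  rw [setIntegral_pos_iff_support_of_nonneg_ae
    (ae_restrict_of_forall_mem hmeas fun x hx ↦ (hpos x hx.1).le) hint]
  have hopen : IsOpen ((C : Set E) ∩ {x | φ x < 1}) :=
    hC.inter (isOpen_lt (by fun_prop) continuous_const)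
  have hnonempty : ((C : Set E) ∩ {x | φ x < 1}).Nonempty := by
    obtain ⟨x, hx⟩ := hne
    obtain ⟨t, ht, htx⟩ := exists_pos_mul_lt one_pos (φ x)
    exact ⟨t • x, C.smul_mem ht hx, by simpa [mul_comm] using htx⟩
  exact (hopen.measure_pos μ hnonempty).trans_le <| measure_mono fun x hx ↦
    ⟨(hpos x hx.1).ne', hx.1, hx.2.out.le⟩

variable [FiniteDimensional ℝ E] [μ.IsAddHaarMeasure]

lemma exists_setIntegral_eq_smul_of_isMinOn_tentVolume {C : ConvexCone ℝ E}
    (hC : IsOpen (C : Set E)) {x₀ : E} (hx₀ : x₀ ∈ C) {φ : StrongDual ℝ E}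
    (hφ : φ ∈ dualSlice (C : Set E) x₀) (hmin : IsMinOn (tentVolume μ C) (dualSlice C x₀) φ)
    (hpos : ∀ x ∈ closure (C : Set E), x ≠ 0 → 0 < φ x) :
    ∃ t : ℝ, 0 < t ∧ ∫ x in (C : Set E) ∩ {x | φ x ≤ 1}, x ∂μ = t • x₀ := by
  set A : Set E := (C : Set E) ∩ {x | φ x ≤ 1}
  obtain ⟨c, hc, hcφ⟩ : ∃ c : ℝ, 0 < c ∧ ∀ x ∈ (C : Set E), c * ‖x‖ ≤ φ x := by
    obtain ⟨c, hc, hcφ⟩ := exists_mul_norm_le_of_pos (K := C.closure) isClosed_closure hpos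
    exact ⟨c, hc, fun x hx ↦ hcφ x (subset_closure hx)⟩
  have hbdd : Bornology.IsBounded A :=
    isBounded_closedBall.subset (inter_setOf_apply_le_one_subset_closedBall hc hcφ le_rfl)
  have happly (ψ : StrongDual ℝ E) : ψ (∫ x in A, x ∂μ) = ∫ x in A, ψ x ∂μ :=
    (ψ.integral_comp_comm (integrableOn_of_continuous_of_isBounded continuous_id hbdd)).symm
  refine ⟨φ (∫ x in A, x ∂μ), ?_, eq_smul_of_forall_dual_eq_zero hφ.1 fun ψ hψ ↦ ?_⟩
  · rw [happly]
    exact setIntegral_inter_setOf_apply_le_one_pos μ hC ⟨x₀, hx₀⟩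
      (fun x hx ↦ pos_of_mem_dualSlice hC hφ hx)
      (integrableOn_of_continuous_of_isBounded φ.continuous hbdd)
  · rw [happly]
    exact setIntegral_eq_zero_of_isMinOn_tentVolume hC.measurableSet hφ hmin hc hcφ hψ

theorem exists_affine_patch_with_centroid_general [Nontrivial E] {C : ConvexCone ℝ E}
    (hC : IsOpen (C : Set E)) (hsal : C.closure.Salient) {x₀ : E} (hx₀ : x₀ ∈ C) :
    ∃ φ : StrongDual ℝ E, (∀ x ∈ closure (C : Set E), x ≠ 0 → 0 < φ x) ∧
      ∃ t : ℝ, 0 < t ∧ ∫ x in (C : Set E) ∩ {x | φ x ∈ Set.Ioc (0 : ℝ) 1}, x ∂μ = t • x₀ := by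
  have hx₀ne : x₀ ≠ 0 := ne_of_mem_of_not_mem hx₀ (zero_notMem_of_isOpen_of_salient_closure hC hsal)
  obtain ⟨φ, hφ, hmin, hpos⟩ := exists_isMinOn_tentVolume μ hC hsal hx₀ hx₀ne
  have hslice : (C : Set E) ∩ {x | φ x ∈ Set.Ioc (0 : ℝ) 1} = (C : Set E) ∩ {x | φ x ≤ 1} := by
    ext x
    exact and_congr_right fun hx ↦ and_iff_right (pos_of_mem_dualSlice hC hφ hx)
  refine ⟨φ, hpos, ?_⟩
  rw [hslice]
  exact exists_setIntegral_eq_smul_of_isMinOn_tentVolume μ hC hx₀ hφ hmin hpos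

end Centroid

lemma IsCone.exists_convexCone {n : ℕ} {C : Set (EuclideanSpace ℝ (Fin (n + 1)))}
    (hC : IsCone C) (hconv : Convex ℝ C) :
    ∃ K : ConvexCone ℝ (EuclideanSpace ℝ (Fin (n + 1))), (K : Set _) = C := by
  refine ⟨.hull ℝ C, ConvexCone.subset_hull.antisymm' fun x hx ↦ ?_⟩
  obtain ⟨t, ht, hxt⟩ := (ConvexCone.mem_hull_of_convex hconv).1 hx
  exact hC t ht ▸ hxt

/-- **Any point is the centroid in a suitable affine patch.** Let `Ω = P(C)` be an open
properly convex domain in `RP^n` and `p = [x₀] ∈ Ω`.  Then there is an affine patch,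
i.e. a linear functional `⟪·, v⟫` positive on `cl(C) \ {0}` (so the hyperplane
`P(ker ⟪·,v⟫)` is disjoint from `cl Ω`), in which `p` is the centroid of `Ω`.  In cone
terms: the centroid of the affine slice `C ∩ {⟪·,v⟫ = 1}` lies on the ray of `x₀`,
equivalently the (vector-valued) centroid of the solid `C ∩ {0 < ⟪·,v⟫ ≤ 1}` lies on
the ray of `x₀`. -/
theorem exists_affine_patch_with_centroid (n : ℕ)
    (C : Set (EuclideanSpace ℝ (Fin (n+1))))
    (hCo : IsOpen C) (hCc : IsCone C) (hconv : Convex ℝ C) (hsharp : IsSharp C)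
    (hne : C.Nonempty) (x₀ : EuclideanSpace ℝ (Fin (n+1))) (hx₀ : x₀ ∈ C) :
    ∃ v : EuclideanSpace ℝ (Fin (n+1)),
      (∀ x ∈ closure C, x ≠ 0 → 0 < ⟪x, v⟫) ∧
      ∃ t : ℝ, 0 < t ∧
        (∫ x in C ∩ {y | ⟪y, v⟫ ∈ Set.Ioc (0:ℝ) 1}, x) = t • x₀ := by
  obtain ⟨K, rfl⟩ := hCc.exists_convexCone hconv
  obtain ⟨φ, hpos, t, ht, hcentroid⟩ := exists_affine_patch_with_centroid_general volume hCo
    (fun v hv hv0 ↦ hsharp v hv0 hv) hx₀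
  have hinner (x : EuclideanSpace ℝ (Fin (n + 1))) :
      ⟪x, (InnerProductSpace.toDual ℝ _).symm φ⟫ = φ x := by
    rw [real_inner_comm, InnerProductSpace.toDual_symm_apply]
  refine ⟨(InnerProductSpace.toDual ℝ _).symm φ, ?_, t, ht, ?_⟩
  · simpa only [hinner] using hpos
  · simpa only [hinner] using hcentroid
end
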